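/- arXiv:2508.07160 — 5 statements merged into one kernel-verified Lean document; each statement's English description precedes it below -/
import Mathlib

section
/- The N×N discrete Fresnel transform (DFnT) matrix Φ_N is unitary, i.e., Φ_N Φ_N^H = I_N. -/
open Matrix Complex

/-- The `N × N` discrete Fresnel transform (DFnT) matrix `Φ_N`, with entries
`[Φ_N]_{m,n} = (1/√N) · exp(−iπ/4 + i(π/N)(m − n + (N mod 2)/2)²)`. -/
noncomputable def dfnt (N : ℕ) : Matrix (Fin N) (Fin N) ℂ :=
  Matrix.of fun m n : Fin N =>
    (1 / (Real.sqrt N : ℂ)) *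
      Complex.exp (-((Real.pi : ℂ) / 4) * Complex.I +
        ((Real.pi : ℂ) / N) * Complex.I *
          (((m : ℕ) : ℂ) - ((n : ℕ) : ℂ) + ((N % 2 : ℕ) : ℂ) / 2) ^ 2)

/-- The DFnT matrix is unitary: `Φ_N Φ_N^H = I_N`. -/
theorem dfnt_mul_conjTranspose_eq_one (N : ℕ) (hN : 0 < N) :
    dfnt N * (dfnt N)ᴴ = 1 := by
  have hN0 : (N : ℂ) ≠ 0 := by exact_mod_cast hN.ne'
  have hsq : ((Real.sqrt N : ℝ) : ℂ) * ((Real.sqrt N : ℝ) : ℂ) = N := by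
    rw [← Complex.ofReal_mul, Real.mul_self_sqrt (Nat.cast_nonneg N)]
    simp
  ext m k
  set c : ℂ := ((N % 2 : ℕ) : ℂ) / 2 with hc
  set w : ℂ := Complex.exp (-(2 * (Real.pi : ℂ) * Complex.I * (((m : ℕ) : ℂ) - ((k : ℕ) : ℂ)) / N)) with hw
  set C : ℂ := Complex.exp (((Real.pi : ℂ) / N) * Complex.I *
    ((((m : ℕ) : ℂ) - ((k : ℕ) : ℂ)) * (((m : ℕ) : ℂ) + ((k : ℕ) : ℂ) + 2 * c))) with hC
  have key : ∀ n : Fin N, dfnt N m n * (dfnt N)ᴴ n k = (1 / (N : ℂ)) * C * w ^ (n : ℕ) := by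
    intro n
    simp only [dfnt, Matrix.conjTranspose_apply, Matrix.of_apply, RCLike.star_def, map_mul,
      map_div₀, map_one, Complex.conj_ofReal, ← Complex.exp_conj, map_add, map_neg, map_sub,
      map_pow, Complex.conj_I, map_natCast, map_ofNat]
    rw [mul_mul_mul_comm, div_mul_div_comm, hsq, mul_one, ← Complex.exp_add, hC, hw,
      ← Complex.exp_nat_mul, mul_assoc (1 / (N : ℂ)), ← Complex.exp_add]
    congr 2
    rw [hc]
    field_simp
    ring
  rw [Matrix.mul_apply, Finset.sum_congr rfl fun n _ => key n, ← Finset.mul_sum,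
    Fin.sum_univ_eq_sum_range (fun n => w ^ n) N]
  by_cases h : m = k
  · subst h
    simp [hw, hC, hN0]
  · rw [Matrix.one_apply_ne h]
    have hwN : w ^ N = 1 := by
      rw [hw, ← Complex.exp_nat_mul, Complex.exp_eq_one_iff]
      refine ⟨((k : ℕ) : ℤ) - ((m : ℕ) : ℤ), ?_⟩
      push_cast
      field_simp
      ring
    have hw1 : w ≠ 1 := by
      intro h1
      rw [hw, Complex.exp_eq_one_iff] at h1
      obtain ⟨j, hj⟩ := h1
      have hpi : (2 * (Real.pi : ℂ) * Complex.I) ≠ 0 := Complex.two_pi_I_ne_zero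
      have h2 : (((k : ℕ) : ℂ) - ((m : ℕ) : ℂ)) = j * N := by
        apply mul_left_cancel₀ hpi
        rw [← mul_assoc, mul_comm _ (j : ℂ), ← hj]
        field_simp
        ring
      have h3 : ((k : ℕ) : ℤ) - ((m : ℕ) : ℤ) = j * N := by exact_mod_cast h2
      have hdvd : (N : ℤ) ∣ ((k : ℕ) : ℤ) - ((m : ℕ) : ℤ) := ⟨j, by rw [h3, mul_comm]⟩
      have hm := m.isLt
      have hk := k.isLt
      have := Int.eq_zero_of_abs_lt_dvd hdvd (by rw [abs_lt]; omega)
      exact h (Fin.ext (by omega))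
    have : (∑ n ∈ Finset.range N, w ^ n) = 0 := by
      rw [geom_sum_eq hw1, hwN]
      simp
    rw [this, mul_zero]
end

section
/- The inverse DFnT matrix Φ_N^H is circulant: there exists a vector φ ∈ ℂ^N such that [Φ_N^H]_{m,n} = φ_{(m−n) mod N} for all 0 ≤ m, n ≤ N−1; equivalently, its entries depend only on (m−n) mod N. -/
open Matrix Complex

/-- The inverse DFnT matrix `Φ_N^H` is circulant: there is a vector `φ ∈ ℂ^N` such that
`[Φ_N^H]_{m,n} = φ_{(m−n) mod N}` for all `m, n` (here `(m−n) mod N` is computed in `ℕ`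
as `(m + N − n) % N`, which lies in `{0,…,N−1}`). -/
theorem dfnt_conjTranspose_circulant (N : ℕ) (hN : 0 < N) :
    ∃ φ : Fin N → ℂ, ∀ m n : Fin N,
      (dfnt N)ᴴ m n = φ ⟨((m : ℕ) + N - (n : ℕ)) % N, Nat.mod_lt _ hN⟩ := by
  refine ⟨fun k => star ((1 / (Real.sqrt N : ℂ)) *
      Complex.exp (-((Real.pi : ℂ) / 4) * Complex.I +
        ((Real.pi : ℂ) / N) * Complex.I *
          (-((k : ℕ) : ℂ) + ((N % 2 : ℕ) : ℂ) / 2) ^ 2)), ?_⟩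
  intro m n
  have hm := m.2
  have hn := n.2
  have hN0 : (N : ℂ) ≠ 0 := by exact_mod_cast hN.ne'
  rw [Matrix.conjTranspose_apply]
  simp only [dfnt, Matrix.of_apply]
  congr 2
  by_cases h : (n : ℕ) ≤ m
  · have hk : ((m : ℕ) + N - (n : ℕ)) % N = (m : ℕ) - n := by
      rw [show (m : ℕ) + N - n = ((m : ℕ) - n) + N by omega, Nat.add_mod_right,
        Nat.mod_eq_of_lt (by omega)]
    rw [hk, Nat.cast_sub h]
    congr 4
    ring
  · have hk : ((m : ℕ) + N - (n : ℕ)) % N = (m : ℕ) + N - n :=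
      Nat.mod_eq_of_lt (by omega)
    rw [hk, Nat.cast_sub (by omega), Complex.exp_eq_exp_iff_exists_int]
    obtain ⟨t, ht⟩ : ∃ t : ℕ, N + N % 2 = 2 * t := ⟨(N + N % 2) / 2, by omega⟩
    have ht' : ((N % 2 : ℕ) : ℂ) = 2 * t - N := by
      rw [eq_sub_iff_add_eq, add_comm]
      exact_mod_cast ht
    refine ⟨(t : ℤ) - ((m : ℕ) + N - (n : ℕ) : ℤ), ?_⟩
    rw [ht']
    push_cast
    field_simp
    ring
end

section
/- For every integer q, the DFnT matrix satisfies the chirp–permutation identity Φ_N D_N^q Φ_N^H = α_q D_N^q Π_N^q, where α_q = exp(i(π/N)·q·((N mod 2) − q)). -/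
open Matrix Complex

/-- The `q`-th integer power `D_K^q` of the diagonal matrix
`D_K = diag(1, e^{2πi/K}, …, e^{2πi(K−1)/K})`: its `k`-th diagonal entry is `e^{2πiqk/K}`. -/
noncomputable def Dzpow (K : ℕ) (q : ℤ) : Matrix (Fin K) (Fin K) ℂ :=
  Matrix.diagonal fun k : Fin K =>
    Complex.exp (2 * (Real.pi : ℂ) * Complex.I * (q : ℂ) * ((k : ℕ) : ℂ) / (K : ℂ))

/-- The `q`-th integer power `Π_K^q` of the cyclic shift permutation matrix `Π_K`
(`[Π_K]_{m,n} = 1` iff `m ≡ n+1 (mod K)`): `[Π_K^q]_{m,n} = 1` iff `m ≡ n + q (mod K)`. -/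
def Pzpow (K : ℕ) (q : ℤ) : Matrix (Fin K) (Fin K) ℂ :=
  Matrix.of fun m n : Fin K =>
    if (((m : ℕ) : ℤ) - ((n : ℕ) : ℤ) - q) % (K : ℤ) = 0 then 1 else 0

/-- `α_q = exp(i(π/N)·q·((N mod 2) − q))`. -/
noncomputable def alphaCoef (N : ℕ) (q : ℤ) : ℂ :=
  Complex.exp (Complex.I * ((Real.pi : ℂ) / N) * (q : ℂ) * (((N % 2 : ℕ) : ℂ) - (q : ℂ)))

lemma geom_aux (N : ℕ) (hN : 0 < N) (s : ℤ) :
    ∑ k : Fin N, Complex.exp (2 * (Real.pi : ℂ) * Complex.I * (s : ℂ) * ((k : ℕ) : ℂ) / (N : ℂ))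
      = if s % (N : ℤ) = 0 then (N : ℂ) else 0 := by
  have hN' : (N : ℂ) ≠ 0 := by exact_mod_cast hN.ne'
  have hpi : (2 * (Real.pi : ℂ) * Complex.I) ≠ 0 := Complex.two_pi_I_ne_zero
  set z : ℂ := Complex.exp (2 * (Real.pi : ℂ) * Complex.I * (s : ℂ) / (N : ℂ)) with hz
  have h1 : ∀ k : ℕ, Complex.exp (2 * (Real.pi : ℂ) * Complex.I * (s : ℂ) * (k : ℂ) / (N : ℂ))
      = z ^ k := by
    intro k
    rw [hz, ← Complex.exp_nat_mul]
    congr 1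
    ring
  simp only [h1]
  rw [Fin.sum_univ_eq_sum_range (fun k => z ^ k)]
  have hzN : z ^ N = 1 := by
    rw [← h1, Complex.exp_eq_one_iff]
    exact ⟨s, by field_simp⟩
  split_ifs with h
  · obtain ⟨t, ht⟩ := Int.dvd_of_emod_eq_zero h
    have : z = 1 := by
      rw [hz, Complex.exp_eq_one_iff]
      refine ⟨t, ?_⟩
      rw [ht]
      push_cast
      field_simp
    simp [this]
  · have hz1 : z ≠ 1 := by
      intro h'
      rw [hz, Complex.exp_eq_one_iff] at h'
      obtain ⟨t, ht⟩ := h'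
      apply h
      apply Int.emod_eq_zero_of_dvd
      refine ⟨t, ?_⟩
      have h2 : (2 * (Real.pi : ℂ) * Complex.I) * (s : ℂ)
          = (2 * (Real.pi : ℂ) * Complex.I) * (N * t) := by
        rw [div_eq_iff hN'] at ht
        rw [ht]
        ring
      exact_mod_cast mul_left_cancel₀ hpi h2
    rw [geom_sum_eq hz1, hzN]
    simp

lemma term_aux (N : ℕ) (hN : 0 < N) (q : ℤ) (m n k : Fin N) :
    dfnt N m k * Complex.exp (2 * (Real.pi : ℂ) * Complex.I * (q : ℂ) * ((k : ℕ) : ℂ) / (N : ℂ))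
        * star (dfnt N n k)
      = (1 / (N : ℂ)) * Complex.exp (((Real.pi : ℂ) / N) * Complex.I * ((((m : ℕ) : ℂ) - ((n : ℕ) : ℂ))
          * (((m : ℕ) : ℂ) + ((n : ℕ) : ℂ) + ((N % 2 : ℕ) : ℂ))))
        * Complex.exp (2 * (Real.pi : ℂ) * Complex.I *
          ((q - (((m : ℕ) : ℤ) - ((n : ℕ) : ℤ)) : ℤ) : ℂ) * ((k : ℕ) : ℂ) / (N : ℂ)) := by
  have hs : (1 / (Real.sqrt N : ℂ)) * (1 / (Real.sqrt N : ℂ)) = 1 / (N : ℂ) := by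
    rw [div_mul_div_comm, one_mul, ← Complex.ofReal_mul, Real.mul_self_sqrt (Nat.cast_nonneg N)]
    simp
  have hc : star (dfnt N n k) = (1 / (Real.sqrt N : ℂ)) *
      Complex.exp (((Real.pi : ℂ) / 4) * Complex.I -
        ((Real.pi : ℂ) / N) * Complex.I *
          (((n : ℕ) : ℂ) - ((k : ℕ) : ℂ) + ((N % 2 : ℕ) : ℂ) / 2) ^ 2) := by
    simp only [dfnt, Matrix.of_apply, Complex.star_def, map_mul, map_div₀, map_one,
      Complex.conj_ofReal, ← Complex.exp_conj, map_add, map_neg, map_pow, map_sub,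
      Complex.conj_I, Complex.conj_natCast, map_ofNat]
    congr 2
    ring
  rw [hc, ← hs]
  simp only [dfnt, Matrix.of_apply]
  rw [mul_assoc (_ * _) (Complex.exp _) (Complex.exp _), ← Complex.exp_add]
  rw [show ∀ a x y b w : ℂ, a * x * y * (b * w) = a * b * (x * y * w) from fun _ _ _ _ _ => by ring,
    ← Complex.exp_add, ← Complex.exp_add]
  congr 2
  push_cast
  ring

/-- The chirp–permutation identity `Φ_N D_N^q Φ_N^H = α_q D_N^q Π_N^q` for every integer `q`. -/
theorem dfnt_chirp_permutation (N : ℕ) (hN : 0 < N) (q : ℤ) :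
    dfnt N * Dzpow N q * (dfnt N)ᴴ = alphaCoef N q • (Dzpow N q * Pzpow N q) := by
  have hN' : (N : ℂ) ≠ 0 := by exact_mod_cast hN.ne'
  ext m n
  rw [Matrix.mul_apply]
  simp only [Dzpow, Matrix.mul_diagonal, Matrix.conjTranspose_apply, Matrix.smul_apply,
    Matrix.diagonal_mul, smul_eq_mul]
  simp only [term_aux N hN q m n]
  rw [← Finset.mul_sum, geom_aux N hN]
  simp only [Pzpow, Matrix.of_apply]
  have hiff : (q - (((m : ℕ) : ℤ) - ((n : ℕ) : ℤ))) % (N : ℤ) = 0 ↔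
      (((m : ℕ) : ℤ) - ((n : ℕ) : ℤ) - q) % (N : ℤ) = 0 := by
    rw [← Int.dvd_iff_emod_eq_zero, ← Int.dvd_iff_emod_eq_zero, ← dvd_neg, neg_sub]
  by_cases h : (((m : ℕ) : ℤ) - ((n : ℕ) : ℤ) - q) % (N : ℤ) = 0
  · rw [if_pos h, if_pos (hiff.2 h), mul_one]
    obtain ⟨t, ht⟩ := Int.dvd_of_emod_eq_zero h
    have hn : ((n : ℕ) : ℂ) = (m : ℕ) - q - N * t := by
      have : ((n : ℕ) : ℤ) = (m : ℕ) - q - N * t := by linarith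
      exact_mod_cast congrArg (Int.cast : ℤ → ℂ) this
    obtain ⟨u, hu⟩ : ∃ u : ℤ, t * ((N % 2 : ℕ) : ℤ) - N * t ^ 2 = 2 * u := by
      have h2 : (2 : ℤ) ∣ t * ((N % 2 : ℕ) : ℤ) - N * t ^ 2 := by
        have hd : (N : ℤ) = ((N % 2 : ℕ) : ℤ) + 2 * ((N / 2 : ℕ) : ℤ) := by
          exact_mod_cast (Nat.mod_add_div N 2).symm
        have he : (2 : ℤ) ∣ t * (t - 1) := (Int.even_mul_pred_self t).two_dvd
        obtain ⟨v, hv⟩ := he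
        generalize ((N % 2 : ℕ) : ℤ) = e at *
        generalize ((N / 2 : ℕ) : ℤ) = f at *
        refine ⟨-e * v - f * t ^ 2, ?_⟩
        rw [hd]
        linear_combination (-e) * hv
      exact h2
    have hu' : (t : ℂ) * ((N % 2 : ℕ) : ℂ) - N * t ^ 2 = 2 * u := by
      generalize N % 2 = e at hu ⊢
      have h3 := congrArg (Int.cast : ℤ → ℂ) hu
      push_cast at h3
      exact h3
    rw [alphaCoef, ← Complex.exp_add, mul_right_comm, one_div, inv_mul_cancel₀ hN', one_mul,
      Complex.exp_eq_exp_iff_exists_int]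
    refine ⟨u + t * m - q * t, ?_⟩
    rw [hn]
    push_cast
    generalize ((N % 2 : ℕ) : ℂ) = e at *
    field_simp
    linear_combination (N : ℂ) * hu'
  · rw [if_neg h, if_neg (fun h' => h (hiff.1 h'))]
    simp
end

section
/- (Proposition 2) Let K = MN and for e ∈ ℂ^K let C(e) be the K×(L+1)(2Q+1) matrix whose column indexed by (l,q), 0 ≤ l ≤ L, −Q ≤ q ≤ Q, equals α_q D_K^q Π_K^{l+qM} e. Then min over all nonzero e ∈ ℂ^K of rank(C(e)) is at most |𝕆(L,Q,M,N)|. In particular, for e₁ = (ε, 0, …, 0)^T with ε ≠ 0, rank(C(e₁)) ≤ |𝕆(L,Q,M,N)|. -/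
open Matrix Complex

/-- The `K × (L+1)(2Q+1)` matrix `C(e)` whose column indexed by `(l, q)` (with `0 ≤ l ≤ L` and
`q = j₂ − Q ∈ {−Q,…,Q}`) is `c_{l,q} = α_q D_K^q Π_K^{l+qM} e`, where `K = MN`. -/
noncomputable def Cmat (M N L Q : ℕ) (e : Fin (M * N) → ℂ) :
    Matrix (Fin (M * N)) (Fin (L + 1) × Fin (2 * Q + 1)) ℂ :=
  Matrix.of fun k j =>
    (alphaCoef N (((j.2 : ℕ) : ℤ) - (Q : ℤ)) •
      ((Dzpow (M * N) (((j.2 : ℕ) : ℤ) - (Q : ℤ)) *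
        Pzpow (M * N) (((j.1 : ℕ) : ℤ) + ((((j.2 : ℕ) : ℤ) - (Q : ℤ)) * (M : ℤ)))) *ᵥ e)) k

/-- The set `𝕆(L,Q,M,N) = { (l + qM) mod (MN) : 0 ≤ l ≤ L, −Q ≤ q ≤ Q } ⊆ {0,…,MN−1}`,
where the mod operation takes values in `{0,…,MN−1}` (integer `emod`). -/
noncomputable def OSet (L Q M N : ℕ) : Finset ℤ :=
  Finset.image (fun p : ℕ × ℤ => ((p.1 : ℤ) + p.2 * (M : ℤ)) % ((M : ℤ) * (N : ℤ)))
    (Finset.range (L + 1) ×ˢ Finset.Icc (-(Q : ℤ)) (Q : ℤ))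

/-- The impulse vector `e₁ = (ε, 0, …, 0)^T ∈ ℂ^K`. -/
def impulseVec (K : ℕ) (ε : ℂ) : Fin K → ℂ := fun k => if (k : ℕ) = 0 then ε else 0

theorem Cmat_impulse_entry (M N L Q : ℕ) (ε : ℂ) (k : Fin (M * N))
    (hk : ((k : ℕ) : ℤ) ∉ OSet L Q M N) (j : Fin (L + 1) × Fin (2 * Q + 1)) :
    Cmat M N L Q (impulseVec (M * N) ε) k j = 0 := by
  have key : (Pzpow (M * N) (((j.1 : ℕ) : ℤ) + ((((j.2 : ℕ) : ℤ) - (Q : ℤ)) * (M : ℤ))) *ᵥ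
      impulseVec (M * N) ε) k = 0 := by
    rw [Matrix.mulVec, dotProduct]
    refine Finset.sum_eq_zero fun n _ => ?_
    simp only [Pzpow, impulseVec, Matrix.of_apply]
    split_ifs with h1 h2
    · exfalso
      apply hk
      rw [OSet, Finset.mem_image]
      refine ⟨((j.1 : ℕ), ((j.2 : ℕ) : ℤ) - (Q : ℤ)), ?_, ?_⟩
      · have h3 := j.1.2
        have h4 := j.2.2
        simp only [Finset.mem_product, Finset.mem_range, Finset.mem_Icc]
        omega
      · rw [h2] at h1
        have h6 := Int.emod_eq_emod_iff_emod_sub_eq_zero.mpr h1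
        have h7 : ((k : ℕ) : ℤ) < ((M * N : ℕ) : ℤ) := by exact_mod_cast k.2
        simp only [Nat.cast_zero, sub_zero] at h6
        rw [Int.emod_eq_of_lt (by positivity) h7] at h6
        push_cast at h6
        exact h6.symm
    all_goals simp
  simp only [Cmat, Matrix.of_apply, Pi.smul_apply, ← Matrix.mulVec_mulVec, Dzpow,
    Matrix.mulVec_diagonal, key]
  simp

theorem rank_Cmat_impulse (M N L Q : ℕ) (ε : ℂ) :
    (Cmat M N L Q (impulseVec (M * N) ε)).rank ≤ (OSet L Q M N).card := by
  classical
  set C := Cmat M N L Q (impulseVec (M * N) ε) with hC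
  let w : Fin (M * N) → ℂ := fun k => if ((k : ℕ) : ℤ) ∈ OSet L Q M N then 1 else 0
  have h : C = Matrix.diagonal w * C := by
    ext k j
    rw [Matrix.diagonal_mul]
    by_cases hk : ((k : ℕ) : ℤ) ∈ OSet L Q M N
    · simp [w, hk]
    · simp [w, hk, hC, Cmat_impulse_entry M N L Q ε k hk j]
  rw [h]
  refine (Matrix.rank_mul_le_left _ _).trans ?_
  rw [Matrix.rank_diagonal, ← Fintype.card_coe (OSet L Q M N)]
  refine Fintype.card_le_of_injective
    (fun i => (⟨((i.1 : ℕ) : ℤ), by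
      by_contra hk
      exact i.2 (by simp [w, hk])⟩ : OSet L Q M N)) ?_
  intro a b hab
  have this : ((a.1 : ℕ) : ℤ) = ((b.1 : ℕ) : ℤ) := congrArg Subtype.val hab
  apply Subtype.ext
  apply Fin.ext
  exact_mod_cast this

/-- (Proposition 2) The minimum over all nonzero `e ∈ ℂ^K` of `rank(C(e))` is at most
`|𝕆(L,Q,M,N)|`; in particular, for `e₁ = (ε, 0, …, 0)^T` with `ε ≠ 0`,
`rank(C(e₁)) ≤ |𝕆(L,Q,M,N)|`. -/
theorem rank_Cmat_min_le_card_OSet (M N L Q : ℕ) (hM : 0 < M) (hN : 0 < N)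
    (ε : ℂ) (hε : ε ≠ 0) :
    sInf {r : ℕ | ∃ e : Fin (M * N) → ℂ, e ≠ 0 ∧ r = (Cmat M N L Q e).rank} ≤
        (OSet L Q M N).card ∧
    (Cmat M N L Q (impulseVec (M * N) ε)).rank ≤ (OSet L Q M N).card := by
  have h := rank_Cmat_impulse M N L Q ε
  refine ⟨le_trans (Nat.sInf_le ⟨impulseVec (M * N) ε, ?_, rfl⟩) h, h⟩
  intro h0
  have h1 := congrFun h0 ⟨0, Nat.mul_pos hM hN⟩
  exact hε (by simpa [impulseVec] using h1)
end

section
/- (OTFS overall PAPR) Let F_N be the N×N unitary DFT matrix with entries [F_N]_{m,n} = (1/√N)·e^{−2πi mn/N}, let 𝕊 ⊂ ℂ be a finite constellation, and let a = max_{s∈𝕊} |s|². Suppose some b ∈ 𝕊 satisfies |b|² = a. Then max over s̄ ∈ 𝕊^N of ‖F_N^H s̄‖_∞² = aN; the maximum is achieved by s̄ = b·1_N, for which ‖F_N^H (b·1_N)‖_∞² = aN, and for every s̄ ∈ 𝕊^N one has ‖F_N^H s̄‖_∞² ≤ aN. -/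
open Matrix Complex

/-- The `N × N` unitary DFT matrix `F_N`, with entries `[F_N]_{m,n} = (1/√N)·e^{−2πi mn/N}`. -/
noncomputable def dftMat (N : ℕ) : Matrix (Fin N) (Fin N) ℂ :=
  Matrix.of fun m n : Fin N =>
    (1 / (Real.sqrt N : ℂ)) *
      Complex.exp (-(2 * (Real.pi : ℂ) * Complex.I * ((m : ℕ) : ℂ) * ((n : ℕ) : ℂ)) / (N : ℂ))

theorem dftMat_norm_aux (N : ℕ) (m n : Fin N) : ‖dftMat N m n‖ = 1 / Real.sqrt N := by
  have h : -(2 * (Real.pi : ℂ) * Complex.I * ((m : ℕ) : ℂ) * ((n : ℕ) : ℂ)) / (N : ℂ)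
      = ((-(2 * Real.pi * (m : ℕ) * (n : ℕ)) / N : ℝ) : ℂ) * Complex.I := by
    push_cast
    ring
  simp only [dftMat, Matrix.of_apply]
  rw [h, norm_mul, Complex.norm_exp_ofReal_mul_I, mul_one, norm_div, norm_one,
    Complex.norm_real, Real.norm_of_nonneg (Real.sqrt_nonneg _)]

/-- (OTFS overall PAPR) Let `𝕊 ⊂ ℂ` be a finite constellation, `a = max_{s∈𝕊} |s|²`, and
`b ∈ 𝕊` with `|b|² = a`. Then `max_{s̄ ∈ 𝕊^N} ‖F_N^H s̄‖_∞² = aN`: for every `s̄ ∈ 𝕊^N` one has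
`‖F_N^H s̄‖_∞² ≤ aN` (entrywise), and the maximum is achieved by `s̄ = b·1_N`, for which some
entry of `F_N^H (b·1_N)` has squared modulus exactly `aN`. -/
theorem otfs_overall_papr (N : ℕ) (hN : 0 < N) (S : Finset ℂ) (a : ℝ) (b : ℂ)
    (hb : b ∈ S) (ha : ∀ x ∈ S, ‖x‖ ^ 2 ≤ a) (hba : ‖b‖ ^ 2 = a) :
    (∀ s : Fin N → ℂ, (∀ n, s n ∈ S) →
        ∀ m, ‖((dftMat N)ᴴ *ᵥ s) m‖ ^ 2 ≤ a * N) ∧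
    (∃ m : Fin N, ‖((dftMat N)ᴴ *ᵥ fun _ => b) m‖ ^ 2 = a * N) := by
  have hN' : (0 : ℝ) < N := by exact_mod_cast hN
  have hs : Real.sqrt N ^ 2 = (N : ℝ) := Real.sq_sqrt hN'.le
  have hs0 : 0 < Real.sqrt (N : ℝ) := Real.sqrt_pos.mpr hN'
  have key : (N : ℝ) * (1 / Real.sqrt N * ‖b‖) = Real.sqrt N * ‖b‖ := by
    field_simp
    rw [hs]
  have hfin : (Real.sqrt N * ‖b‖) ^ 2 = a * N := by
    rw [mul_pow, hs, hba, mul_comm]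
  refine ⟨fun s hS m => ?_, ⟨⟨0, hN⟩, ?_⟩⟩
  · rw [← hfin, ← key]
    apply pow_le_pow_left₀ (norm_nonneg _)
    simp only [Matrix.mulVec, dotProduct, Matrix.conjTranspose_apply]
    calc _ ≤ ∑ n : Fin N, ‖star (dftMat N n m) * s n‖ := norm_sum_le _ _
      _ ≤ ∑ n : Fin N, (1 / Real.sqrt N * ‖b‖) := by
        apply Finset.sum_le_sum
        intro n _
        rw [norm_mul, norm_star, dftMat_norm_aux]
        have : ‖s n‖ ≤ ‖b‖ := by
          apply (sq_le_sq₀ (norm_nonneg _) (norm_nonneg _)).mp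
          rw [hba]
          exact ha _ (hS n)
        gcongr
      _ = _ := by simp
  · rw [← hfin, ← key]
    congr 1
    simp only [Matrix.mulVec, dotProduct, Matrix.conjTranspose_apply]
    have : ∀ n : Fin N, dftMat N n ⟨0, hN⟩ = ((1 / Real.sqrt N : ℝ) : ℂ) := by
      intro n
      simp [dftMat]
    simp only [this]
    simp [abs_of_pos hs0]
end
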